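/- arXiv:2407.11530 — 2 statements merged into one kernel-verified Lean document; each statement's English description precedes it below -/
import Mathlib

section
/- Let θ ∈ (0,1), μ₁ > 0, τ > 0, C₂ ≥ 0, b ≥ 0, let (a_n)_{n∈ℕ} be nonnegative reals, and let (t_n)_{n∈ℕ} be reals with t_n ≥ nτ for all n. Assume a_{n+1} ≤ C₂ e^{−μ₁ t_n} b + θ a_n for all n ∈ ℕ. Fix ε ∈ (0, μ₁) and define θ₁ := max{θ, e^{−μ₁τ}} if θ ≠ e^{−μ₁τ}, and θ₁ := e^{−(μ₁−ε)τ} if θ = e^{−μ₁τ}. Then there exists a constant D > 0 such that for all n ∈ ℕ, a_{n+1} ≤ C₂ D θ₁^{n+1} b + θ^{n+1} a₀. -/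
/-- unified geometric decay bound for the recursion
`a_{n+1} ≤ C₂ e^{−μ₁ t_n} b + θ a_n` with `t_n ≥ nτ`: with
`θ₁ = max{θ, e^{−μ₁τ}}` if `θ ≠ e^{−μ₁τ}` and `θ₁ = e^{−(μ₁−ε)τ}` otherwise,
there is `D > 0` with `a_{n+1} ≤ C₂ D θ₁^{n+1} b + θ^{n+1} a₀`. -/
theorem stmt_10 (θ μ₁ τ C₂ b ε : ℝ) (hθ : θ ∈ Set.Ioo (0 : ℝ) 1)
    (hμ₁ : 0 < μ₁) (hτ : 0 < τ) (hC₂ : 0 ≤ C₂) (hb : 0 ≤ b)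
    (a : ℕ → ℝ) (ha : ∀ n, 0 ≤ a n) (t : ℕ → ℝ) (ht : ∀ n : ℕ, (n : ℝ) * τ ≤ t n)
    (hrec : ∀ n, a (n + 1) ≤ C₂ * Real.exp (-μ₁ * t n) * b + θ * a n)
    (hε : ε ∈ Set.Ioo 0 μ₁)
    (θ₁ : ℝ)
    (hθ₁ : θ₁ = if θ = Real.exp (-μ₁ * τ) then Real.exp (-(μ₁ - ε) * τ)
      else max θ (Real.exp (-μ₁ * τ))) :
    ∃ D > 0, ∀ n, a (n + 1) ≤ C₂ * D * θ₁ ^ (n + 1) * b + θ ^ (n + 1) * a 0 := by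
  obtain ⟨hθ0, hθ1⟩ := hθ
  obtain ⟨hε0, hε1⟩ := hε
  set q := Real.exp (-μ₁ * τ) with hq
  have hq0 : 0 < q := Real.exp_pos _
  have hexp : ∀ n, Real.exp (-μ₁ * t n) ≤ q ^ n := by
    intro n
    rw [hq, ← Real.exp_nat_mul]
    apply Real.exp_le_exp.mpr
    nlinarith [mul_le_mul_of_nonneg_left (ht n) hμ₁.le]
  have hCb : 0 ≤ C₂ * b := mul_nonneg hC₂ hb
  have key : ∀ s : ℕ → ℝ, 0 ≤ s 0 → (∀ n, q ^ n + θ * s n ≤ s (n + 1)) →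
      ∀ n, a n ≤ C₂ * b * s n + θ ^ n * a 0 := by
    intro s h0 hs n
    induction n with
    | zero => have := mul_nonneg hCb h0; simp; linarith
    | succ k ih =>
      have h1 := hrec k
      have h2 := mul_le_mul_of_nonneg_left (hexp k) hCb
      have h3 := mul_le_mul_of_nonneg_left ih hθ0.le
      have h4 := mul_le_mul_of_nonneg_left (hs k) hCb
      rw [pow_succ]
      nlinarith
  rcases lt_or_ge q θ with h | h
  · -- the case q < θ, so θ₁ = θ
    have hθ₁' : θ₁ = θ := by rw [hθ₁, if_neg h.ne', max_eq_left h.le]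
    have hd : 0 < θ - q := sub_pos.mpr h
    refine ⟨1 / (θ - q), by positivity, fun n => ?_⟩
    have h1 := key (fun n => (θ ^ n - q ^ n) / (θ - q)) (by simp) (by
      intro n
      apply le_of_eq
      field_simp
      ring) (n + 1)
    have h2 : (θ ^ (n + 1) - q ^ (n + 1)) / (θ - q) ≤ 1 / (θ - q) * θ ^ (n + 1) := by
      rw [one_div_mul_eq_div]
      gcongr
      have := pow_pos hq0 (n + 1)
      linarith
    have h3 := mul_le_mul_of_nonneg_left h2 hCb
    rw [hθ₁']
    nlinarith
  · have hlt : θ < θ₁ ∧ q ≤ θ₁ := by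
      by_cases he : θ = q
      · rw [if_pos he] at hθ₁
        have : q < θ₁ := by
          rw [hθ₁, hq]
          apply Real.exp_lt_exp.mpr
          nlinarith [mul_pos hε0 hτ]
        exact ⟨he ▸ this, this.le⟩
      · rw [if_neg he, max_eq_right h] at hθ₁
        exact ⟨hθ₁ ▸ lt_of_le_of_ne h he, hθ₁.ge⟩
    obtain ⟨hl, hle⟩ := hlt
    have hd : 0 < θ₁ - θ := sub_pos.mpr hl
    refine ⟨1 / (θ₁ - θ), by positivity, fun n => ?_⟩
    have h1 := key (fun n => 1 / (θ₁ - θ) * θ₁ ^ n) (by simp; exact hl.le) (by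
      intro n
      have h2 : q ^ n ≤ θ₁ ^ n := pow_le_pow_left₀ hq0.le hle n
      have h3 : θ₁ ^ n + θ * (1 / (θ₁ - θ) * θ₁ ^ n) = 1 / (θ₁ - θ) * θ₁ ^ (n + 1) := by
        field_simp
        ring
      linarith) (n + 1)
    linarith
end

section
/- Let θ ∈ (0,1), μ₁ > 0, 0 < τ ≤ T, and C₂ ≥ 0, with θ ≠ e^{−μ₁τ}, and set θ₁ := max{θ, e^{−μ₁τ}} and μ₂ := T^{−1} log(θ₁^{−1}). Let b ≥ 0, let (a_n)_{n∈ℕ} be nonnegative reals, and let (t_n)_{n∈ℕ} be reals with t₀ = 0 and τ ≤ t_{n+1} − t_n ≤ T for all n. Assume a_{n+1} ≤ C₂ e^{−μ₁ t_n} b + θ a_n for all n ∈ ℕ. Then there exists a constant D ≥ 1 such that a_n ≤ D e^{−μ₂ t_n} (a₀ + b) for all n ∈ ℕ. -/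
/-- discrete-time skeleton of the main theorem.  With
`θ ∈ (0,1)`, `θ ≠ e^{−μ₁τ}`, `θ₁ = max{θ, e^{−μ₁τ}}`,
`μ₂ = T⁻¹ log(θ₁⁻¹)`, concatenation times with `t₀ = 0` and
`τ ≤ t_{n+1} − t_n ≤ T`, and the recursion
`a_{n+1} ≤ C₂ e^{−μ₁ t_n} b + θ a_n`, there is `D ≥ 1` with
`a_n ≤ D e^{−μ₂ t_n} (a₀ + b)` for all `n`. -/
theorem stmt_12 (θ μ₁ τ T C₂ b : ℝ) (hθ : θ ∈ Set.Ioo (0 : ℝ) 1)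
    (hμ₁ : 0 < μ₁) (hτ : 0 < τ) (hτT : τ ≤ T) (hC₂ : 0 ≤ C₂)
    (hθne : θ ≠ Real.exp (-μ₁ * τ)) (hb : 0 ≤ b)
    (θ₁ μ₂ : ℝ) (hθ₁ : θ₁ = max θ (Real.exp (-μ₁ * τ)))
    (hμ₂ : μ₂ = T⁻¹ * Real.log θ₁⁻¹)
    (a : ℕ → ℝ) (ha : ∀ n, 0 ≤ a n) (t : ℕ → ℝ) (ht0 : t 0 = 0)
    (htlow : ∀ n : ℕ, τ ≤ t (n + 1) - t n) (htup : ∀ n : ℕ, t (n + 1) - t n ≤ T)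
    (hrec : ∀ n, a (n + 1) ≤ C₂ * Real.exp (-μ₁ * t n) * b + θ * a n) :
    ∃ D ≥ 1, ∀ n, a n ≤ D * Real.exp (-μ₂ * t n) * (a 0 + b) := by
  obtain ⟨hθ0, hθ1⟩ := hθ
  have hT : 0 < T := lt_of_lt_of_le hτ hτT
  set ρ := Real.exp (-μ₁ * τ) with hρ
  have hρ0 : 0 < ρ := Real.exp_pos _
  have hρ1 : ρ < 1 := by
    rw [hρ, Real.exp_lt_one_iff]
    nlinarith [mul_pos hμ₁ hτ]
  have hθ₁0 : 0 < θ₁ := by rw [hθ₁]; exact lt_max_of_lt_left hθ0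
  have hθ₁1 : θ₁ < 1 := by rw [hθ₁]; exact max_lt hθ1 hρ1
  have hθle : θ ≤ θ₁ := by rw [hθ₁]; exact le_max_left _ _
  have hρle : ρ ≤ θ₁ := by rw [hθ₁]; exact le_max_right _ _
  have hμT : μ₂ * T = -Real.log θ₁ := by
    rw [hμ₂, Real.log_inv]; field_simp
  have hμ₂0 : 0 ≤ μ₂ := by
    have := Real.log_neg hθ₁0 hθ₁1
    by_contra h
    push Not at h
    nlinarith [mul_pos (neg_pos.2 h) hT]
  have hlow : ∀ n : ℕ, n * τ ≤ t n := by
    intro n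
    induction n with
    | zero => simp [ht0]
    | succ k ih => have := htlow k; push_cast; linarith
  have hup : ∀ n : ℕ, t n ≤ n * T := by
    intro n
    induction n with
    | zero => simp [ht0]
    | succ k ih => have := htup k; push_cast; linarith
  have he1 : ∀ n : ℕ, Real.exp (-μ₁ * t n) ≤ ρ ^ n := by
    intro n
    rw [hρ, ← Real.exp_nat_mul]
    apply Real.exp_le_exp.2
    nlinarith [mul_le_mul_of_nonneg_left (hlow n) hμ₁.le]
  have he2 : ∀ n : ℕ, θ₁ ^ n ≤ Real.exp (-μ₂ * t n) := by
    intro n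
    have h1 : θ₁ ^ n = Real.exp (n * Real.log θ₁) := by
      rw [Real.exp_nat_mul, Real.exp_log hθ₁0]
    rw [h1]
    apply Real.exp_le_exp.2
    have h2 : Real.log θ₁ = -(μ₂ * T) := by linarith
    rw [h2]
    nlinarith [mul_le_mul_of_nonneg_left (hup n) hμ₂0]
  have hne : ρ - θ ≠ 0 := sub_ne_zero.2 (Ne.symm hθne)
  obtain ⟨K, hK⟩ : ∃ K, K = C₂ / (ρ - θ) := ⟨_, rfl⟩
  have hKC : C₂ = K * (ρ - θ) := by rw [hK]; field_simp
  have hclaim : ∀ n : ℕ, a n ≤ θ ^ n * a 0 + K * b * (ρ ^ n - θ ^ n) := by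
    intro n
    induction n with
    | zero => simp
    | succ k ih =>
      have h1 := hrec k
      have h2 : C₂ * Real.exp (-μ₁ * t k) * b ≤ C₂ * ρ ^ k * b := by
        gcongr
        exact he1 k
      have h3 := mul_le_mul_of_nonneg_left ih hθ0.le
      calc a (k + 1) ≤ C₂ * ρ ^ k * b
            + θ * (θ ^ k * a 0 + K * b * (ρ ^ k - θ ^ k)) := by linarith
        _ = _ := by rw [hKC]; ring
  refine ⟨1 + |K|, by linarith [abs_nonneg K], fun n => ?_⟩
  have hpθ : θ ^ n ≤ θ₁ ^ n := by gcongr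
  have hpρ : ρ ^ n ≤ θ₁ ^ n := by gcongr
  have hd : |ρ ^ n - θ ^ n| ≤ θ₁ ^ n := by
    rw [abs_le]
    constructor <;> linarith [pow_pos hρ0 n, pow_pos hθ0 n]
  have h1 : K * b * (ρ ^ n - θ ^ n) ≤ |K| * b * θ₁ ^ n := by
    calc K * b * (ρ ^ n - θ ^ n) ≤ |K * b * (ρ ^ n - θ ^ n)| := le_abs_self _
      _ = |K| * b * |ρ ^ n - θ ^ n| := by rw [abs_mul, abs_mul, abs_of_nonneg hb]
      _ ≤ _ := by gcongr
  have h2 : θ ^ n * a 0 ≤ θ₁ ^ n * a 0 := mul_le_mul_of_nonneg_right hpθ (ha 0)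
  have hp := pow_pos hθ₁0 n
  have h3 : 0 ≤ |K| * θ₁ ^ n * a 0 :=
    mul_nonneg (mul_nonneg (abs_nonneg K) hp.le) (ha 0)
  have h4 : 0 ≤ θ₁ ^ n * b := mul_nonneg hp.le hb
  calc a n ≤ (1 + |K|) * θ₁ ^ n * (a 0 + b) := by linarith [hclaim n]
    _ ≤ _ := by
      have := ha 0
      gcongr
      exact he2 n
end
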